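/- Let 1 ≤ q < p ≤ ∞ and define r by 1/q = 1/p + 1/r, and suppose 2 < r < ∞. Then there is a constant c_r (depending only on r) such that for every bounded linear operator T : X → Y between real Banach spaces whose rank is at most n one has π_{p,q}(T) ≤ c_r · π_{p,q}^{m}(T), where m = ⌊n^{r/2}⌋. -/

import Mathlib

open scoped ENNReal NNReal BigOperators

noncomputable section

/-- The `ℓ_p`-sum `(∑ i, f i ^ p) ^ (1/p)` of a finite family in `ℝ≥0∞`,
with the usual sup-modification for `p = ∞`. -/
def eSum (p : ℝ≥0∞) {ι : Type*} [Fintype ι] (f : ι → ℝ≥0∞) : ℝ≥0∞ :=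
  if p = ∞ then ⨆ i, f i else (∑ i, f i ^ p.toReal) ^ (1 / p.toReal)

/-- The weak `ℓ_q`-norm of a finite family of vectors:
`sup { (∑ k |⟨x_k, x*⟩|^q)^(1/q) : x* in the unit ball of the dual }`. -/
def weakLq (q : ℝ≥0∞) {X : Type*} [NormedAddCommGroup X] [NormedSpace ℝ X]
    {n : ℕ} (x : Fin n → X) : ℝ≥0∞ :=
  ⨆ f : {f : X →L[ℝ] ℝ // ‖f‖ ≤ 1}, eSum q fun k => ENNReal.ofReal |f.1 (x k)|

/-- The `(p,q)`-summing norm of `T` with respect to `n` vectors. -/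
def piN (p q : ℝ≥0∞) {X Y : Type*} [NormedAddCommGroup X] [NormedSpace ℝ X]
    [NormedAddCommGroup Y] [NormedSpace ℝ Y] (n : ℕ) (T : X →L[ℝ] Y) : ℝ≥0∞ :=
  ⨆ x : {x : Fin n → X // weakLq q x ≤ 1}, eSum p fun k => ENNReal.ofReal ‖T (x.1 k)‖

/-- The `(p,q)`-summing norm of `T`. -/
def piPQ (p q : ℝ≥0∞) {X Y : Type*} [NormedAddCommGroup X] [NormedSpace ℝ X]
    [NormedAddCommGroup Y] [NormedSpace ℝ Y] (T : X →L[ℝ] Y) : ℝ≥0∞ :=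
  ⨆ n : ℕ, piN p q n T

/-- `T` has rank at most `n`: its range is a finite-dimensional subspace of
dimension at most `n`. -/
def RankLE {X Y : Type*} [NormedAddCommGroup X] [NormedSpace ℝ X]
    [NormedAddCommGroup Y] [NormedSpace ℝ Y] (T : X →L[ℝ] Y) (n : ℕ) : Prop :=
  FiniteDimensional ℝ (LinearMap.range (T : X →ₗ[ℝ] Y)) ∧
    Module.finrank ℝ (LinearMap.range (T : X →ₗ[ℝ] Y)) ≤ n

/-- The average of `‖∑ k, ε k • x k‖²` over all `2^n` sign choices `ε ∈ {-1,1}^n`. -/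
def radAvg {X : Type*} [NormedAddCommGroup X] [NormedSpace ℝ X] {n : ℕ}
    (x : Fin n → X) : ℝ :=
  (∑ ε : Fin n → Bool, ‖∑ k, (if ε k then (1 : ℝ) else -1) • x k‖ ^ 2) / 2 ^ n

/-- The Rademacher cotype `q` constant of `T` with respect to `n` vectors. -/
def cotypeN (q : ℝ) {X Y : Type*} [NormedAddCommGroup X] [NormedSpace ℝ X]
    [NormedAddCommGroup Y] [NormedSpace ℝ Y] (n : ℕ) (T : X →L[ℝ] Y) : ℝ≥0∞ :=
  ⨆ x : {x : Fin n → X // Real.sqrt (radAvg x) ≤ 1},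
    (∑ k, ENNReal.ofReal ‖T (x.1 k)‖ ^ q) ^ (1 / q)

/-- The Rademacher cotype `q` constant of `T`. -/
def cotype (q : ℝ) {X Y : Type*} [NormedAddCommGroup X] [NormedSpace ℝ X]
    [NormedAddCommGroup Y] [NormedSpace ℝ Y] (T : X →L[ℝ] Y) : ℝ≥0∞ :=
  ⨆ n : ℕ, cotypeN q n T

/-!
Suppose `T` satisfies the summing inequality with constant `K` for `m ≥ n` vectors, and let
`y k = T (x k)` for `N` weakly summable vectors `x k`, scaled so that all `‖y k‖` equal some `t`.
Call a block of indices large if it supports a combination of the `y k`, with coefficients in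
`[-1, 1]`, whose norm exceeds a multiple of `K N ^ (1 - 1/q) u ^ (1 - 1/r)`, where `u` is the
density of the block, cut off below at about `1 / m`. Disjoint large blocks, suitably normalised,
are again weakly summable, so at most `m` of them are disjoint and a maximal disjoint family uses
few indices. On the remaining indices no block is large. As the `y k` span a space of dimension at
most `n`, one of them is a combination of the others and itself whose squared coefficients sum to
at most `2n / N`. Splitting the coefficients dyadically bounds `t` by a geometric series of ratio
`2 ^ (2/r - 1)`, and this is where `r > 2` enters. The result is the weak-type estimate
`t ≤ c √n K N ^ (-1/q)`. For arbitrary `x k` it bounds the contribution to `(∑ ‖y k‖ ^ p) ^ (1/p)`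
of all but the `m` largest terms by a multiple of `K √n m ^ (-1/r)`, that is, by a multiple of `K`
when `m = ⌊n ^ (r/2)⌋`.
-/

section FiniteSums

lemma sum_pow_le_one_div_one_sub {ρ : ℝ} (h0 : 0 ≤ ρ) (h1 : ρ < 1) (s : Finset ℕ) :
    ∑ i ∈ s, ρ ^ i ≤ 1 / (1 - ρ) := by
  rw [one_div, ← tsum_geometric_of_lt_one h0 h1]
  exact (summable_geometric_of_lt_one h0 h1).sum_le_tsum _ fun i _ ↦ pow_nonneg h0 i

lemma mul_rpow_neg_one_sub_le_sub {α x : ℝ} (hα : 0 ≤ α) (hx : 1 < x) :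
    α * x ^ (-1 - α) ≤ (x - 1) ^ (-α) - x ^ (-α) := by
  have hx0 : 0 < x := by linarith
  have hquot : 0 < (x - 1) / x := div_pos (by linarith) hx0
  have bernoulli : 1 + α / x ≤ ((x - 1) / x) ^ (-α) := by
    have hlog : Real.log ((x - 1) / x) ≤ -(1 / x) :=
      (Real.log_le_sub_one_of_pos hquot).trans_eq (by field_simp; ring)
    calc 1 + α / x = -(1 / x) * -α + 1 := by ring
      _ ≤ Real.log ((x - 1) / x) * -α + 1 := by nlinarith
      _ ≤ Real.exp (Real.log ((x - 1) / x) * -α) := Real.add_one_le_exp _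
      _ = ((x - 1) / x) ^ (-α) := (Real.rpow_def_of_pos hquot _).symm
  have hfactor : (x - 1) ^ (-α) = ((x - 1) / x) ^ (-α) * x ^ (-α) := by
    rw [← Real.mul_rpow hquot.le hx0.le, div_mul_cancel₀ _ hx0.ne']
  have hpow : x ^ (-1 - α) = x ^ (-α) / x := by
    rw [← Real.rpow_sub_one hx0.ne']
    ring_nf
  have := mul_le_mul_of_nonneg_right bernoulli (Real.rpow_nonneg hx0.le (-α))
  rw [hfactor, hpow]
  linarith [show (1 + α / x) * x ^ (-α) = x ^ (-α) + α * (x ^ (-α) / x) by ring]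

lemma mul_sum_Ioc_rpow_neg_one_sub_le {α : ℝ} (hα : 0 ≤ α) {m : ℕ} (hm : 1 ≤ m) (n : ℕ) :
    α * ∑ j ∈ Finset.Ioc m n, (j : ℝ) ^ (-1 - α) ≤ (m : ℝ) ^ (-α) := by
  rcases lt_or_ge n m with hnm | hmn
  · rw [Finset.Ioc_eq_empty_of_le hnm.le, Finset.sum_empty, mul_zero]
    positivity
  suffices telescoped : α * ∑ j ∈ Finset.Ioc m n, (j : ℝ) ^ (-1 - α) ≤
      (m : ℝ) ^ (-α) - (n : ℝ) ^ (-α) from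
    telescoped.trans (sub_le_self _ (by positivity))
  induction n, hmn using Nat.le_induction with
  | base => simp
  | succ n hmn ih =>
    have hstep := mul_rpow_neg_one_sub_le_sub hα (x := (n + 1 : ℕ))
      (by exact_mod_cast Nat.lt_add_of_pos_left (hm.trans hmn))
    rw [Nat.cast_succ, add_sub_cancel_right] at hstep
    rw [Finset.sum_Ioc_succ_top hmn, mul_add, Nat.cast_succ]
    linarith

/- Removing a smallest element of `s` over and over plays the role of a decreasing
rearrangement of `a`. -/
lemma exists_card_le_sum_sdiff_le {ι : Type*} [DecidableEq ι] {a : ι → ℝ} {b : ℕ → ℝ}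
    {s : Finset ι} (hab : ∀ D ⊆ s, D.Nonempty → ∃ k ∈ D, a k ≤ b D.card) (m : ℕ) :
    ∃ H ⊆ s, H.card ≤ m ∧ ∑ k ∈ s \ H, a k ≤ ∑ j ∈ Finset.Ioc m s.card, b j := by
  induction s using Finset.strongInduction with
  | H s ih =>
    rcases le_or_gt s.card m with hsm | hms
    · exact ⟨s, subset_rfl, hsm, by simp [Finset.Ioc_eq_empty_of_le hsm]⟩
    obtain ⟨k, hks, hk⟩ := hab s subset_rfl (Finset.card_pos.1 (by omega))
    obtain ⟨H, hH, hHm, hsum⟩ := ih (s.erase k) (Finset.erase_ssubset hks)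
      fun D hD ↦ hab D (hD.trans (s.erase_subset k))
    refine ⟨H, hH.trans (s.erase_subset k), hHm, ?_⟩
    have hcard : s.card = (s.erase k).card + 1 := (Finset.card_erase_add_one hks).symm
    have hkH : k ∈ s \ H := Finset.mem_sdiff.2 ⟨hks, fun h ↦ Finset.notMem_erase k s (hH h)⟩
    rw [← Finset.sum_erase_add _ _ hkH, ← Finset.erase_sdiff_comm, hcard,
      Finset.sum_Ioc_succ_top (by omega), ← hcard]
    exact add_le_add hsum hk

lemma sum_rpow_le_of_weak_type {ι : Type*} {s : Finset ι} {a : ι → ℝ}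
    {A K p q r : ℝ} (hp : 1 ≤ p) (hr : 1 ≤ r) (hpq : 1 / q = 1 / p + 1 / r) (hK : 0 ≤ K)
    (hA : 0 ≤ A) (ha : ∀ k, 0 ≤ a k) {m : ℕ} (hm : 1 ≤ m)
    (hsmall : ∀ H ⊆ s, H.card ≤ m → ∑ k ∈ H, a k ^ p ≤ K ^ p)
    (hweak : ∀ D ⊆ s, D.Nonempty → ∃ k ∈ D, a k ≤ A * (D.card : ℝ) ^ (-(1 / q))) :
    ∑ k ∈ s, a k ^ p ≤ (K + r * (A * (m : ℝ) ^ (-(1 / r)))) ^ p := by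
  classical
  have hp0 : 0 < p := by linarith
  have hr0 : 0 < r := by linarith
  have hexp : -(1 / q) * p = -1 - p / r := by
    rw [hpq]
    field_simp
    ring
  have hweak_rpow : ∀ D ⊆ s, D.Nonempty →
      ∃ k ∈ D, a k ^ p ≤ A ^ p * (D.card : ℝ) ^ (-1 - p / r) := fun D hD hne ↦ by
    obtain ⟨k, hkD, hk⟩ := hweak D hD hne
    refine ⟨k, hkD, (Real.rpow_le_rpow (ha k) hk hp0.le).trans_eq ?_⟩
    rw [Real.mul_rpow hA (by positivity), ← Real.rpow_mul (by positivity), hexp]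
  obtain ⟨H, hHs, hHm, hrest⟩ :=
    exists_card_le_sum_sdiff_le (b := fun j ↦ A ^ p * (j : ℝ) ^ (-1 - p / r)) hweak_rpow m
  set X := A * (m : ℝ) ^ (-(1 / r)) with hX
  have hX0 : 0 ≤ X := by positivity
  have htail : ∑ k ∈ s \ H, a k ^ p ≤ (r * X) ^ p := by
    have hseries := mul_sum_Ioc_rpow_neg_one_sub_le (div_nonneg hp0.le hr0.le) hm s.card
    have hXp : X ^ p = A ^ p * (m : ℝ) ^ (-(p / r)) := by
      rw [hX, Real.mul_rpow hA (by positivity), ← Real.rpow_mul (by positivity)]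
      ring_nf
    have hrp : r / p ≤ r ^ p := (div_le_self hr0.le hp).trans (Real.self_le_rpow_of_one_le hr hp)
    calc ∑ k ∈ s \ H, a k ^ p
        ≤ r / p * (A ^ p * (p / r * ∑ j ∈ Finset.Ioc m s.card, (j : ℝ) ^ (-1 - p / r))) := by
          refine hrest.trans_eq ?_
          rw [← Finset.mul_sum]
          field_simp
      _ ≤ r / p * (A ^ p * (m : ℝ) ^ (-(p / r))) := by gcongr
      _ ≤ r ^ p * X ^ p := by
          rw [hXp]
          gcongr
      _ = (r * X) ^ p := (Real.mul_rpow hr0.le hX0).symm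
  calc ∑ k ∈ s, a k ^ p = ∑ k ∈ s \ H, a k ^ p + ∑ k ∈ H, a k ^ p := (Finset.sum_sdiff hHs).symm
    _ ≤ (r * X) ^ p + K ^ p := add_le_add htail (hsmall H hHs hHm)
    _ = K ^ p + (r * X) ^ p := add_comm _ _
    _ ≤ (K + r * X) ^ p := Real.add_rpow_le_rpow_add hK (by positivity) hp

end FiniteSums

section RankReduction

variable {𝕜 ι E F : Type*} [RCLike 𝕜] [Fintype ι] [NormedAddCommGroup E] [InnerProductSpace 𝕜 E]
  [FiniteDimensional 𝕜 E] [AddCommGroup F] [Module 𝕜 F]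

lemma sum_norm_sq_starProjection_basis (U : Submodule 𝕜 E) (b : OrthonormalBasis ι 𝕜 E) :
    ∑ i, ‖U.starProjection (b i)‖ ^ 2 = Module.finrank 𝕜 U := by
  have htrace : LinearMap.trace 𝕜 E U.starProjection = Module.finrank 𝕜 U :=
    LinearMap.IsProj.trace ⟨U.starProjection_apply_mem,
      fun _ ↦ Submodule.starProjection_eq_self_iff.2⟩
  rw [LinearMap.trace_eq_sum_inner _ b] at htrace
  have hre := congrArg RCLike.re htrace
  rw [map_sum, RCLike.natCast_re] at hre
  rw [← hre]
  refine Finset.sum_congr rfl fun i _ ↦ ?_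
  rw [inner_re_symm]
  exact (U.re_inner_starProjection_eq_normSq (b i)).symm

lemma exists_norm_sq_le_finrank_range_div_card [Nonempty ι] (A : E →ₗ[𝕜] F)
    (b : OrthonormalBasis ι 𝕜 E) :
    ∃ i v, ‖v‖ ^ 2 ≤ (Module.finrank 𝕜 (LinearMap.range A) : ℝ) / Fintype.card ι ∧
      A v = A (b i) := by
  let U := (LinearMap.ker A)ᗮ
  have hrank : Module.finrank 𝕜 U = Module.finrank 𝕜 (LinearMap.range A) := by
    have hadd := (LinearMap.ker A).finrank_add_finrank_orthogonal
    rw [← A.finrank_range_add_finrank_ker] at hadd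
    change Module.finrank 𝕜 (LinearMap.ker A)ᗮ = _
    omega
  obtain ⟨i, -, hi⟩ : ∃ i ∈ (Finset.univ : Finset ι),
      ‖U.starProjection (b i)‖ ^ 2 ≤
        (Module.finrank 𝕜 (LinearMap.range A) : ℝ) / Fintype.card ι := by
    refine Finset.exists_le_of_sum_le Finset.univ_nonempty (le_of_eq ?_)
    rw [sum_norm_sq_starProjection_basis, hrank, Finset.sum_const, nsmul_eq_mul, Finset.card_univ,
      mul_div_cancel₀ _ (by positivity)]
  have hker : b i - U.starProjection (b i) ∈ LinearMap.ker A := by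
    have horth := U.sub_starProjection_mem_orthogonal (b i)
    rwa [(LinearMap.ker A).orthogonal_orthogonal] at horth
  exact ⟨i, U.starProjection (b i), hi, (sub_eq_zero.1 ((map_sub A _ _).symm.trans hker)).symm⟩

lemma exists_sum_smul_eq_of_finrank_span {κ G : Type*} [AddCommGroup G] [Module ℝ G] {s : Finset κ}
    (hs : s.Nonempty) (y : κ → G) :
    ∃ k ∈ s, ∃ f : κ → ℝ,
      ∑ l ∈ s, f l ^ 2 ≤ (Module.finrank ℝ (Submodule.span ℝ (y '' s)) : ℝ) / s.card ∧
      ∑ l ∈ s, f l • y l = y k := by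
  classical
  have : Nonempty s := hs.to_subtype
  let A : EuclideanSpace ℝ s →ₗ[ℝ] G :=
    Fintype.linearCombination ℝ (fun l : s ↦ y l) ∘ₗ (WithLp.linearEquiv 2 ℝ (s → ℝ)).toLinearMap
  have hrange : LinearMap.range A = Submodule.span ℝ (y '' s) := by
    rw [LinearEquiv.range_comp, Fintype.range_linearCombination, Set.image_eq_range]
    rfl
  obtain ⟨k, v, hv, hAv⟩ :=
    exists_norm_sq_le_finrank_range_div_card A (EuclideanSpace.basisFun s ℝ)
  have hext (l : s) : Function.extend Subtype.val v 0 (l : κ) = v l :=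
    Subtype.val_injective.extend_apply _ _ _
  refine ⟨k, k.2, Function.extend Subtype.val v 0, ?_, ?_⟩
  · rw [← Finset.sum_coe_sort]
    rw [EuclideanSpace.norm_sq_eq, hrange, Fintype.card_coe] at hv
    simpa only [hext, Real.norm_eq_abs, sq_abs] using hv
  · rw [← Finset.sum_coe_sort]
    simpa [A, hext, Fintype.linearCombination_apply, -Finset.univ_eq_attach,
      Pi.single_apply, ite_smul] using hAv

lemma exists_sum_smul_map_eq_of_rank_le {κ V W : Type*} [AddCommGroup V] [Module ℝ V]
    [AddCommGroup W] [Module ℝ W] (T : V →ₗ[ℝ] W) [FiniteDimensional ℝ (LinearMap.range T)] {n : ℕ}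
    (hT : Module.finrank ℝ (LinearMap.range T) ≤ n) {s : Finset κ} (hs : s.Nonempty) (x : κ → V) :
    ∃ k ∈ s, ∃ f : κ → ℝ,
      ∑ l ∈ s, f l ^ 2 ≤ (n : ℝ) / s.card ∧ ∑ l ∈ s, f l • T (x l) = T (x k) := by
  obtain ⟨k, hks, f, hf, hfk⟩ := exists_sum_smul_eq_of_finrank_span hs fun l ↦ T (x l)
  have hspan : Submodule.span ℝ ((fun l ↦ T (x l)) '' s) ≤ LinearMap.range T := by
    rw [Submodule.span_le]
    rintro _ ⟨l, -, rfl⟩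
    exact ⟨x l, rfl⟩
  refine ⟨k, hks, f, hf.trans ?_, hfk⟩
  gcongr
  exact (Submodule.finrank_mono hspan).trans hT

end RankReduction

lemma exists_maximal_pairwiseDisjoint {ι : Type*} [DecidableEq ι] (D : Finset ι)
    {P : Finset ι → Prop} (hP : ∀ B, P B → B.Nonempty) :
    ∃ F : Finset (Finset ι), (∀ B ∈ F, B ⊆ D ∧ P B) ∧
      (F : Set (Finset ι)).PairwiseDisjoint id ∧ ∀ B ⊆ D \ F.biUnion id, ¬ P B := by
  let admissible : Set (Finset (Finset ι)) :=
    {F | (∀ B ∈ F, B ⊆ D ∧ P B) ∧ (F : Set (Finset ι)).PairwiseDisjoint id}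
  have hfin : admissible.Finite := D.powerset.powerset.finite_toSet.subset fun F hF ↦
    Finset.mem_coe.2 <| Finset.mem_powerset.2 fun B hB ↦ Finset.mem_powerset.2 (hF.1 B hB).1
  obtain ⟨F, hF⟩ := hfin.exists_maximal ⟨∅, by simp [admissible]⟩
  refine ⟨F, hF.prop.1, hF.prop.2, fun B hB hPB ↦ ?_⟩
  have hdisj : ∀ B' ∈ F, Disjoint B B' := fun B' hB' ↦
    Finset.disjoint_of_subset_left hB
      (Finset.disjoint_of_subset_right (Finset.subset_biUnion_of_mem id hB') Finset.sdiff_disjoint)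
  have hinsert : insert B F ∈ admissible := by
    refine ⟨(Finset.forall_mem_insert _ _ _).2 ⟨⟨hB.trans Finset.sdiff_subset, hPB⟩, hF.prop.1⟩, ?_⟩
    rw [Finset.coe_insert]
    exact hF.prop.2.insert fun B' hB' _ ↦ hdisj B' hB'
  have hBF : B ∈ F := hF.le_of_ge hinsert (Finset.subset_insert B F) (Finset.mem_insert_self B F)
  exact (hP B hPB).ne_empty (disjoint_self.1 (hdisj B hBF))

section BlockBound

variable {ι Y : Type*} [SeminormedAddCommGroup Y] [NormedSpace ℝ Y]

/-- Every sum `∑ l ∈ B, g l • y l` with `B ⊆ s` and coefficients in `[-1, 1]` has norm at most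
`Φ |B|`. The argument of `Φ` is real because it is applied to upper bounds for `|B|`. -/
def BlockBound (Φ : ℝ → ℝ) (s : Finset ι) (y : ι → Y) : Prop :=
  ∀ B ⊆ s, ∀ g : ι → ℝ, (∀ l ∈ B, |g l| ≤ 1) → ‖∑ l ∈ B, g l • y l‖ ≤ Φ B.card

variable {Φ : ℝ → ℝ} {s : Finset ι} {y : ι → Y} {f : ι → ℝ} {v : ℝ}

lemma BlockBound.norm_sum_smul_le (h : BlockBound Φ s y) {B : Finset ι} (hB : B ⊆ s) {c : ℝ}
    (hc : 0 < c) (hf : ∀ l ∈ B, |f l| ≤ c) : ‖∑ l ∈ B, f l • y l‖ ≤ c * Φ B.card := by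
  have hscale : ∑ l ∈ B, f l • y l = c • ∑ l ∈ B, (f l / c) • y l := by
    simp only [Finset.smul_sum, smul_smul, mul_div_cancel₀ _ hc.ne']
  rw [hscale, norm_smul, Real.norm_of_nonneg hc.le]
  gcongr
  refine h B hB _ fun l hl ↦ ?_
  rw [abs_div, abs_of_pos hc, div_le_one hc]
  exact hf l hl

lemma card_filter_lt_abs_le (hf : ∑ l ∈ s, f l ^ 2 ≤ v) {θ : ℝ} (hθ : 0 < θ) :
    ((s.filter fun l ↦ θ < |f l|).card : ℝ) ≤ v / θ ^ 2 := by
  rw [le_div_iff₀ (by positivity), ← nsmul_eq_mul]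
  refine (Finset.card_nsmul_le_sum _ (fun l ↦ f l ^ 2) _ fun l hl ↦ ?_).trans
    ((Finset.sum_le_sum_of_subset_of_nonneg (s.filter_subset _) fun l _ _ ↦ sq_nonneg _).trans hf)
  rw [← sq_abs (f l)]
  exact pow_le_pow_left₀ hθ.le (Finset.mem_filter.1 hl).2.le 2

lemma BlockBound.norm_sum_filter_le (h : BlockBound Φ s y) (hΦ : Monotone Φ)
    (hf : ∑ l ∈ s, f l ^ 2 ≤ v) {θ : ℝ} (hθ : 0 < θ) (J : ℕ) :
    ‖∑ l ∈ s with |f l| ≤ 2 ^ J * θ, f l • y l‖ ≤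
      θ * Φ s.card + ∑ i ∈ Finset.range J, 2 ^ (i + 1) * θ * Φ (v / (2 ^ i * θ) ^ 2) := by
  induction J with
  | zero =>
    rw [pow_zero, one_mul, Finset.sum_range_zero, add_zero]
    refine (h.norm_sum_smul_le (s.filter_subset _) hθ
      fun l hl ↦ (Finset.mem_filter.1 hl).2).trans ?_
    exact mul_le_mul_of_nonneg_left (hΦ (mod_cast Finset.card_filter_le s _)) hθ.le
  | succ J ih =>
    set low := s.filter fun l ↦ |f l| ≤ 2 ^ J * θ with hlow
    set layer := s.filter fun l ↦ |f l| ≤ 2 ^ (J + 1) * θ ∧ ¬ |f l| ≤ 2 ^ J * θ with hlayer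
    have hsplit : ∑ l ∈ s with |f l| ≤ 2 ^ (J + 1) * θ, f l • y l =
        ∑ l ∈ low, f l • y l + ∑ l ∈ layer, f l • y l := by
      have hmono : 2 ^ J * θ ≤ 2 ^ (J + 1) * θ := by gcongr <;> norm_num
      rw [← Finset.sum_filter_add_sum_filter_not (s.filter fun l ↦ |f l| ≤ 2 ^ (J + 1) * θ)
        (fun l ↦ |f l| ≤ 2 ^ J * θ), Finset.filter_filter, Finset.filter_filter, hlow]
      simp only [and_iff_right_of_imp fun hl : |f _| ≤ 2 ^ J * θ ↦ hl.trans hmono, ← hlayer]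
    have hcard : (layer.card : ℝ) ≤ v / (2 ^ J * θ) ^ 2 := by
      refine le_trans ?_ (card_filter_lt_abs_le hf (by positivity))
      rw [hlayer, Nat.cast_le]
      gcongr with l
      exact fun h ↦ not_le.1 h.2
    have hlayer_le : ‖∑ l ∈ layer, f l • y l‖ ≤
        2 ^ (J + 1) * θ * Φ (v / (2 ^ J * θ) ^ 2) := by
      refine (h.norm_sum_smul_le (s.filter_subset _) (by positivity)
        fun l hl ↦ (Finset.mem_filter.1 hl).2.1).trans ?_
      gcongr
      exact hΦ hcard
    rw [hsplit, Finset.sum_range_succ, ← add_assoc]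
    exact (norm_add_le _ _).trans (add_le_add ih hlayer_le)

lemma norm_sum_filter_not_abs_le {t : ℝ} (ht : 0 ≤ t) (hy : ∀ l ∈ s, ‖y l‖ ≤ t)
    (hf : ∑ l ∈ s, f l ^ 2 ≤ v) {θ : ℝ} (hθ : 0 < θ) :
    ‖∑ l ∈ s with ¬ |f l| ≤ θ, f l • y l‖ ≤ t * (v / θ) := by
  have hterm : ∀ l ∈ s.filter (fun l ↦ ¬ |f l| ≤ θ), ‖f l • y l‖ ≤ t / θ * f l ^ 2 := by
    intro l hl
    obtain ⟨hls, hl⟩ := Finset.mem_filter.1 hl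
    rw [norm_smul, Real.norm_eq_abs, ← sq_abs (f l), div_mul_eq_mul_div, le_div_iff₀ hθ]
    calc |f l| * ‖y l‖ * θ ≤ |f l| * t * |f l| := by
          gcongr
          exacts [hy l hls, (not_le.1 hl).le]
      _ = t * |f l| ^ 2 := by ring
  calc ‖∑ l ∈ s with ¬ |f l| ≤ θ, f l • y l‖
      ≤ ∑ l ∈ s with ¬ |f l| ≤ θ, t / θ * f l ^ 2 := norm_sum_le_of_le _ hterm
    _ = t / θ * ∑ l ∈ s with ¬ |f l| ≤ θ, f l ^ 2 := (Finset.mul_sum _ _ _).symm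
    _ ≤ t / θ * v := by
        gcongr
        exact (Finset.sum_le_sum_of_subset_of_nonneg (s.filter_subset _)
          fun l _ _ ↦ sq_nonneg _).trans hf
    _ = t * (v / θ) := by ring

end BlockBound

section DensityGauge

/-- The bound `C * u ^ α` for blocks of size `b`, where `u` is the density `b / N` of such a block
in a set of size `N`, cut off below at `δ`. -/
def densityGauge (C N δ α b : ℝ) : ℝ :=
  C * max (b / N) δ ^ α

variable {C N δ α : ℝ}

lemma densityGauge_nonneg (hC : 0 ≤ C) (hδ : 0 ≤ δ) (b : ℝ) : 0 ≤ densityGauge C N δ α b :=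
  mul_nonneg hC (Real.rpow_nonneg (le_max_of_le_right hδ) _)

lemma monotone_densityGauge (hC : 0 ≤ C) (hN : 0 ≤ N) (hδ : 0 ≤ δ) (hα : 0 ≤ α) :
    Monotone (densityGauge C N δ α) := fun _ _ hb ↦
  mul_le_mul_of_nonneg_left (Real.rpow_le_rpow (le_max_of_le_right hδ)
    (max_le_max (div_le_div_of_nonneg_right hb hN) le_rfl) hα) hC

lemma two_pow_mul_inv_four_pow_rpow (α : ℝ) (i : ℕ) :
    (2 : ℝ) ^ i * ((4 ^ i)⁻¹) ^ α = ((2 : ℝ) ^ (1 - 2 * α)) ^ i := by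
  have hfour : ((4 : ℝ) ^ i)⁻¹ = 2 ^ (-2 * i : ℝ) := by
    rw [neg_mul, Real.rpow_neg zero_le_two, Real.rpow_mul zero_le_two, Real.rpow_natCast]
    norm_num
  rw [hfour, ← Real.rpow_mul zero_le_two, ← Real.rpow_natCast 2 i, ← Real.rpow_add zero_lt_two,
    ← Real.rpow_mul_natCast zero_le_two]
  ring_nf

variable {ι Y : Type*} [SeminormedAddCommGroup Y] [NormedSpace ℝ Y] {s : Finset ι} {y : ι → Y}
  {f : ι → ℝ}

/- The dyadic layer `2 ^ i * θ < |f l| ≤ 2 ^ (i + 1) * θ` has density at most `4 ^ (-i)`, so the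
layers contribute a geometric series with ratio `2 ^ (1 - 2 * α)`. -/
lemma BlockBound.norm_sum_filter_le_of_densityGauge (h : BlockBound (densityGauge C N δ α) s y)
    (hC : 0 ≤ C) (hN : 0 < N) (hδ : 0 ≤ δ) (hα : 1 / 2 < α) (hs : (s.card : ℝ) ≤ N) {θ : ℝ}
    (hθ : 0 < θ) (hf : ∑ l ∈ s, f l ^ 2 ≤ N * θ ^ 2) {J : ℕ} (hδ1 : δ ≤ 1)
    (hδJ : ∀ i < J, δ ≤ (4 ^ i)⁻¹) :
    ‖∑ l ∈ s with |f l| ≤ 2 ^ J * θ, f l • y l‖ ≤ 3 / (1 - 2 ^ (1 - 2 * α)) * (C * θ) := by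
  set ρ : ℝ := 2 ^ (1 - 2 * α) with hρ
  have hρ0 : 0 < ρ := by positivity
  have hρ1 : ρ < 1 := Real.rpow_lt_one_of_one_lt_of_neg one_lt_two (by linarith)
  have hmono := monotone_densityGauge hC hN.le hδ (by linarith : 0 ≤ α)
  have hall : densityGauge C N δ α s.card ≤ C :=
    (hmono hs).trans_eq <| by
      rw [densityGauge, div_self hN.ne', max_eq_left hδ1, Real.one_rpow, mul_one]
  have hlayer : ∀ i ∈ Finset.range J,
      2 ^ (i + 1) * θ * densityGauge C N δ α (N * θ ^ 2 / (2 ^ i * θ) ^ 2) =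
        2 * (C * θ) * ρ ^ i := by
    intro i hi
    have hdensity : N * θ ^ 2 / (2 ^ i * θ) ^ 2 / N = (4 ^ i)⁻¹ := by
      rw [show (4 : ℝ) = 2 ^ 2 by norm_num, ← pow_mul, mul_comm 2 i, pow_mul]
      field_simp
    rw [densityGauge, hdensity, max_eq_left (hδJ i (Finset.mem_range.1 hi)), hρ,
      ← two_pow_mul_inv_four_pow_rpow]
    ring
  have hone : 1 ≤ 1 / (1 - ρ) := (one_le_div (by linarith)).2 (by linarith)
  calc ‖∑ l ∈ s with |f l| ≤ 2 ^ J * θ, f l • y l‖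
      ≤ θ * densityGauge C N δ α s.card + ∑ i ∈ Finset.range J, 2 * (C * θ) * ρ ^ i :=
        (h.norm_sum_filter_le hmono hf hθ J).trans_eq (by rw [Finset.sum_congr rfl hlayer])
    _ ≤ θ * C + 2 * (C * θ) * (1 / (1 - ρ)) := by
        rw [← Finset.mul_sum]
        gcongr
        exact sum_pow_le_one_div_one_sub hρ0.le hρ1 _
    _ ≤ C * θ * (1 / (1 - ρ)) + 2 * (C * θ) * (1 / (1 - ρ)) := by
        rw [mul_comm θ C]
        exact add_le_add_left (le_mul_of_one_le_right (by positivity) hone) _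
    _ = 3 / (1 - ρ) * (C * θ) := by ring

lemma BlockBound.norm_sum_le_of_densityGauge (h : BlockBound (densityGauge C N δ α) s y)
    (hC : 0 ≤ C) (hN : 0 < N) (hδ : 0 ≤ δ) (hα : 1 / 2 < α) (hs : (s.card : ℝ) ≤ N) {v : ℝ}
    (hf : ∑ l ∈ s, f l ^ 2 ≤ v / N) (hv : 1 ≤ 4 * v) (hδv : δ * (4 * v) ≤ 1) {t : ℝ} (ht : 0 ≤ t)
    (hy : ∀ l ∈ s, ‖y l‖ ≤ t) :
    ‖∑ l ∈ s, f l • y l‖ ≤ 3 / (1 - 2 ^ (1 - 2 * α)) * (C * (√v / N)) + t / 2 := by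
  have hv0 : 0 < v := by linarith
  set θ : ℝ := √v / N with hθ
  have hθ0 : 0 < θ := by positivity
  have hfθ : ∑ l ∈ s, f l ^ 2 ≤ N * θ ^ 2 := hf.trans_eq <| by
    rw [hθ, div_pow, Real.sq_sqrt hv0.le]
    field_simp
  have hsqrt : (2 * √v) ^ 2 = 4 * v := by
    rw [mul_pow, Real.sq_sqrt hv0.le]
    norm_num
  obtain ⟨J, hJ, hJ'⟩ := exists_nat_pow_near (x := 2 * √v)
    ((one_le_sq_iff₀ (by positivity)).1 (hsqrt ▸ hv)) one_lt_two
  have hδJ : ∀ i < J + 1, δ ≤ (4 ^ i)⁻¹ := fun i hi ↦ by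
    rw [← one_div, le_div_iff₀ (by positivity)]
    refine le_trans ?_ hδv
    gcongr
    calc (4 : ℝ) ^ i ≤ 4 ^ J := pow_le_pow_right₀ (by norm_num) (Nat.lt_succ_iff.1 hi)
      _ = (2 ^ J) ^ 2 := by rw [← pow_mul, mul_comm, pow_mul]; norm_num
      _ ≤ 4 * v := hsqrt ▸ pow_le_pow_left₀ (by positivity) hJ 2
  have hδ1 : δ ≤ 1 := by simpa using hδJ 0 J.succ_pos
  have hsmall := h.norm_sum_filter_le_of_densityGauge hC hN hδ hα hs hθ0 hfθ hδ1 hδJ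
  have hlarge : ‖∑ l ∈ s with ¬ |f l| ≤ 2 ^ (J + 1) * θ, f l • y l‖ ≤ t / 2 := by
    refine (norm_sum_filter_not_abs_le ht hy hfθ (by positivity)).trans ?_
    rw [div_eq_mul_one_div t 2]
    refine mul_le_mul_of_nonneg_left ?_ ht
    rw [div_le_div_iff₀ (by positivity) two_pos, show N * θ ^ 2 * 2 = 2 * √v * θ by
      rw [hθ]; field_simp, one_mul]
    exact mul_le_mul_of_nonneg_right hJ'.le hθ0.le
  rw [← Finset.sum_filter_add_sum_filter_not s fun l ↦ |f l| ≤ 2 ^ (J + 1) * θ]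
  exact (norm_add_le _ _).trans (add_le_add hsmall hlarge)

end DensityGauge

section Summing

variable {ι X Y : Type*} [SeminormedAddCommGroup X] [NormedSpace ℝ X] [SeminormedAddCommGroup Y]
  [NormedSpace ℝ Y]

/-- The weak `ℓ_q`-norm of the family `x i`, `i ∈ s`, is at most one. -/
def WeakSumLeOne (q : ℝ) (s : Finset ι) (x : ι → X) : Prop :=
  ∀ f : X →L[ℝ] ℝ, ‖f‖ ≤ 1 → ∑ i ∈ s, |f (x i)| ^ q ≤ 1

/-- The inequality `π_{p,q}^m(T) ≤ K`, for finite `p`, `q` and `K ≥ 0`, without extended reals. -/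
def SummingBound (T : X →L[ℝ] Y) (p q K : ℝ) (m : ℕ) : Prop :=
  ∀ x : Fin m → X, WeakSumLeOne q Finset.univ x → ∑ i, ‖T (x i)‖ ^ p ≤ K ^ p

variable {T : X →L[ℝ] Y} {p q K : ℝ} {m : ℕ} {s D : Finset ι} {x : ι → X}

lemma WeakSumLeOne.subset (h : WeakSumLeOne q s x) (hD : D ⊆ s) : WeakSumLeOne q D x :=
  fun f hf ↦ le_trans (Finset.sum_le_sum_of_subset_of_nonneg hD fun _ _ _ ↦ by positivity) (h f hf)

lemma WeakSumLeOne.smul (h : WeakSumLeOne q s x) (hq : 0 ≤ q) {c : ι → ℝ}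
    (hc : ∀ i ∈ s, |c i| ≤ 1) : WeakSumLeOne q s (fun i ↦ c i • x i) := by
  refine fun f hf ↦ le_trans (Finset.sum_le_sum fun i hi ↦ ?_) (h f hf)
  rw [map_smul, smul_eq_mul, abs_mul]
  exact Real.rpow_le_rpow (by positivity) (mul_le_of_le_one_left (abs_nonneg _) (hc i hi)) hq

lemma SummingBound.sum_le (h : SummingBound T p q K m) (hp : p ≠ 0) (hq : q ≠ 0)
    (hs : s.card ≤ m) (hx : WeakSumLeOne q s x) : ∑ i ∈ s, ‖T (x i)‖ ^ p ≤ K ^ p := by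
  obtain ⟨e⟩ : Nonempty (s ↪ Fin m) := Function.Embedding.nonempty_of_card_le (by simpa using hs)
  let z : Fin m → X := Function.extend e (fun i ↦ x i) 0
  have hsum : ∀ g : X → ℝ, g 0 = 0 → ∑ j, g (z j) = ∑ i ∈ s, g (x i) := fun g hg ↦ by
    rw [← Finset.sum_coe_sort s]
    refine (Fintype.sum_of_injective e e.injective (fun i : s ↦ g (x i)) (fun j ↦ g (z j))
      (fun j hj ↦ ?_) fun i ↦ ?_).symm
    · rw [show z j = 0 from Function.extend_apply' _ _ _ hj, hg]
    · rw [show z (e i) = x i from e.injective.extend_apply _ _ _]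
  have hz : WeakSumLeOne q Finset.univ z := fun f hf ↦
    (hsum (fun u ↦ |f u| ^ q) (by simp [hq])).trans_le (hx f hf)
  exact (hsum (fun u ↦ ‖T u‖ ^ p) (by simp [hp])).symm.trans_le (h z hz)

lemma rpow_abs_rpow_mul_sum_le {B : Finset ι} {a g : ι → ℝ} {w : ℝ} (hq : 1 ≤ q) (hw : 0 < w)
    (hB : (B.card : ℝ) ≤ w) (hg : ∀ l ∈ B, |g l| ≤ 1) :
    |w ^ (-(1 - 1 / q)) * ∑ l ∈ B, g l * a l| ^ q ≤ ∑ l ∈ B, |a l| ^ q := by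
  have hq0 : 0 < q := by linarith
  have habs : |∑ l ∈ B, g l * a l| ≤ ∑ l ∈ B, |a l| :=
    (Finset.abs_sum_le_sum_abs _ _).trans <| Finset.sum_le_sum fun l hl ↦ by
      rw [abs_mul]
      exact mul_le_of_le_one_left (abs_nonneg _) (hg l hl)
  have hexp : -(1 - 1 / q) * q = -(q - 1) := by
    field_simp
  rw [abs_mul, abs_of_pos (by positivity), Real.mul_rpow (by positivity) (abs_nonneg _),
    ← Real.rpow_mul hw.le, hexp]
  calc w ^ (-(q - 1)) * |∑ l ∈ B, g l * a l| ^ q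
      ≤ w ^ (-(q - 1)) * ((B.card : ℝ) ^ (q - 1) * ∑ l ∈ B, |a l| ^ q) := by
        gcongr
        exact (Real.rpow_le_rpow (abs_nonneg _) habs hq0.le).trans
          (Real.rpow_sum_le_const_mul_sum_rpow B a hq)
    _ ≤ w ^ (-(q - 1)) * (w ^ (q - 1) * ∑ l ∈ B, |a l| ^ q) := by
        gcongr
    _ = ∑ l ∈ B, |a l| ^ q := by
        rw [← mul_assoc, ← Real.rpow_add hw, neg_add_cancel, Real.rpow_zero, one_mul]

variable {F : Finset (Finset ι)} {g : Finset ι → ι → ℝ}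

lemma WeakSumLeOne.normalized_blocks (hx : WeakSumLeOne q D x) (hq : 1 ≤ q)
    (hFD : ∀ B ∈ F, B ⊆ D) (hdisj : (F : Set (Finset ι)).PairwiseDisjoint id) {w : Finset ι → ℝ}
    (hw : ∀ B ∈ F, 0 < w B) (hcard : ∀ B ∈ F, (B.card : ℝ) ≤ w B)
    (hg : ∀ B ∈ F, ∀ l ∈ B, |g B l| ≤ 1) :
    WeakSumLeOne q F (fun B ↦ w B ^ (-(1 - 1 / q)) • ∑ l ∈ B, g B l • x l) := by
  classical
  intro f hf
  calc ∑ B ∈ F, |f (w B ^ (-(1 - 1 / q)) • ∑ l ∈ B, g B l • x l)| ^ q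
      ≤ ∑ B ∈ F, ∑ l ∈ B, |f (x l)| ^ q := Finset.sum_le_sum fun B hB ↦ by
        simp only [map_smul, map_sum, smul_eq_mul]
        exact rpow_abs_rpow_mul_sum_le hq (hw B hB) (hcard B hB) (hg B hB)
    _ = ∑ l ∈ F.biUnion id, |f (x l)| ^ q := (Finset.sum_biUnion hdisj).symm
    _ ≤ 1 := hx.subset (Finset.biUnion_subset.2 hFD) f hf

lemma mul_rpow_mul_lt_norm_normalized_rpow {r a N u : ℝ} (hp : 1 ≤ p)
    (hpq : 1 / q = 1 / p + 1 / r) (hK : 0 ≤ K) (ha : 1 ≤ a) (hN : 0 < N) (hu : 0 < u) {y : Y}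
    (hy : a * K * N ^ (1 - 1 / q) * u ^ (1 - 1 / r) < ‖y‖) :
    a * K ^ p * u < ‖(N * u) ^ (-(1 - 1 / q)) • y‖ ^ p := by
  have hp0 : 0 < p := by linarith
  have hnorm : a * K * u ^ (1 / p) < ‖(N * u) ^ (-(1 - 1 / q)) • y‖ := by
    have huexp : u ^ (1 / p) = u ^ (-(1 - 1 / q)) * u ^ (1 - 1 / r) := by
      rw [← Real.rpow_add hu, hpq]
      ring_nf
    have hNexp : N ^ (-(1 - 1 / q)) * N ^ (1 - 1 / q) = 1 := by
      rw [← Real.rpow_add hN, neg_add_cancel, Real.rpow_zero]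
    rw [norm_smul, Real.norm_of_nonneg (by positivity)]
    refine lt_of_eq_of_lt ?_ (mul_lt_mul_of_pos_left hy (by positivity))
    rw [Real.mul_rpow hN.le hu.le, huexp]
    linear_combination -(a * K * u ^ (-(1 - 1 / q)) * u ^ (1 - 1 / r)) * hNexp
  calc a * K ^ p * u ≤ a ^ p * K ^ p * u := by
        gcongr
        exact Real.self_le_rpow_of_one_le ha hp
    _ = (a * K * u ^ (1 / p)) ^ p := by
        rw [Real.mul_rpow (by positivity) (by positivity), Real.mul_rpow (by positivity) hK,
          ← Real.rpow_mul hu.le, one_div_mul_cancel hp0.ne', Real.rpow_one]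
    _ < ‖(N * u) ^ (-(1 - 1 / q)) • y‖ ^ p := Real.rpow_lt_rpow (by positivity) hnorm hp0

lemma SummingBound.sum_density_lt (h : SummingBound T p q K m) (hp : 1 ≤ p) (hq : 1 ≤ q)
    {r : ℝ} (hpq : 1 / q = 1 / p + 1 / r) (hK : 0 ≤ K) (hx : WeakSumLeOne q D x)
    (hFD : ∀ B ∈ F, B ⊆ D) (hdisj : (F : Set (Finset ι)).PairwiseDisjoint id) (hFm : F.card ≤ m)
    {a N : ℝ} (ha : 1 ≤ a) (hN : 0 < N) {u : Finset ι → ℝ} (hu : ∀ B ∈ F, 0 < u B)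
    (hcard : ∀ B ∈ F, (B.card : ℝ) ≤ N * u B) (hg : ∀ B ∈ F, ∀ l ∈ B, |g B l| ≤ 1)
    (hlarge : ∀ B ∈ F,
      a * K * N ^ (1 - 1 / q) * u B ^ (1 - 1 / r) < ‖∑ l ∈ B, g B l • T (x l)‖) :
    ∑ B ∈ F, u B < 1 / a := by
  rcases F.eq_empty_or_nonempty with rfl | hF
  · rw [Finset.sum_empty]
    positivity
  let z : Finset ι → X := fun B ↦ (N * u B) ^ (-(1 - 1 / q)) • ∑ l ∈ B, g B l • x l
  have hz : WeakSumLeOne q F z :=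
    hx.normalized_blocks hq hFD hdisj (fun B hB ↦ mul_pos hN (hu B hB)) hcard hg
  have hTz : ∀ B ∈ F, a * K ^ p * u B < ‖T (z B)‖ ^ p := fun B hB ↦ by
    simpa only [z, map_smul, map_sum] using
      mul_rpow_mul_lt_norm_normalized_rpow hp hpq hK ha hN (hu B hB) (hlarge B hB)
  have hsum : K ^ p * (a * ∑ B ∈ F, u B) < K ^ p * 1 := by
    calc K ^ p * (a * ∑ B ∈ F, u B) = ∑ B ∈ F, a * K ^ p * u B := by rw [← Finset.mul_sum]; ring
      _ < ∑ B ∈ F, ‖T (z B)‖ ^ p := Finset.sum_lt_sum_of_nonempty hF hTz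
      _ ≤ K ^ p * 1 :=
        (h.sum_le (by linarith) (by linarith) hFm hz).trans_eq (mul_one _).symm
  rw [lt_div_iff₀' (by linarith)]
  exact lt_of_mul_lt_mul_left hsum (by positivity)

lemma card_biUnion_le_of_sum_lt [DecidableEq ι] {N δ : ℝ} (hN : 0 ≤ N) {u : Finset ι → ℝ}
    (hδ : ∀ B ∈ F, δ ≤ u B) (hcard : ∀ B ∈ F, (B.card : ℝ) ≤ N * u B)
    (hsum : ∀ F' ⊆ F, F'.card ≤ m → ∑ B ∈ F', u B < m * δ) :
    ((F.biUnion id).card : ℝ) ≤ N * (m * δ) := by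
  have hFm : F.card ≤ m := by
    by_contra! hlt
    obtain ⟨F', hF', hF'm⟩ := Finset.exists_subset_card_eq hlt.le
    refine (hsum F' hF' hF'm.le).not_ge ?_
    rw [← hF'm, ← nsmul_eq_mul]
    exact Finset.card_nsmul_le_sum _ _ _ fun B hB ↦ hδ B (hF' hB)
  calc ((F.biUnion id).card : ℝ) ≤ ∑ B ∈ F, (B.card : ℝ) := mod_cast Finset.card_biUnion_le
    _ ≤ N * ∑ B ∈ F, u B := (Finset.sum_le_sum hcard).trans_eq (Finset.mul_sum _ _ _).symm
    _ ≤ N * (m * δ) := mul_le_mul_of_nonneg_left (hsum F subset_rfl hFm).le hN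

/- A maximal disjoint family of blocks violating the bound is removed: normalising these blocks
shows that they cover at most `N / a` indices. -/
lemma SummingBound.exists_blockBound (h : SummingBound T p q K m) (hp : 1 ≤ p) (hq : 1 ≤ q)
    {r : ℝ} (hpq : 1 / q = 1 / p + 1 / r) (hK : 0 ≤ K) (hm : 1 ≤ m) (hx : WeakSumLeOne q D x)
    (hD : D.Nonempty) {a : ℝ} (ha : 1 ≤ a) :
    ∃ R ⊆ D, (1 - 1 / a) * D.card ≤ R.card ∧
      BlockBound (densityGauge (a * K * (D.card : ℝ) ^ (1 - 1 / q)) D.card (1 / a / m)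
        (1 - 1 / r)) R (T ∘ x) := by
  classical
  obtain ⟨N, hNdef⟩ : ∃ N : ℝ, N = D.card := ⟨_, rfl⟩
  rw [← hNdef]
  have hN : 0 < N := hNdef ▸ Nat.cast_pos.2 hD.card_pos
  have hm0 : (0 : ℝ) < m := Nat.cast_pos.2 hm
  set δ : ℝ := 1 / a / m with hδ
  have hδ0 : 0 < δ := by positivity
  set Φ := densityGauge (a * K * N ^ (1 - 1 / q)) N δ (1 - 1 / r)
  have hΦ0 (b : ℝ) : 0 ≤ Φ b := densityGauge_nonneg (by positivity) hδ0.le b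
  obtain ⟨F, hF, hdisj, hmax⟩ := exists_maximal_pairwiseDisjoint D
    (P := fun B ↦ ∃ g : ι → ℝ, (∀ l ∈ B, |g l| ≤ 1) ∧ Φ B.card < ‖∑ l ∈ B, g l • T (x l)‖)
    fun B ⟨g, _, hlt⟩ ↦ Finset.nonempty_iff_ne_empty.2 fun hB ↦
      (hΦ0 B.card).not_gt (by simpa [hB] using hlt)
  choose! g hg hlarge using fun B hB ↦ (hF B hB).2
  have hFD : ∀ B ∈ F, B ⊆ D := fun B hB ↦ (hF B hB).1
  have hcard : ∀ B ∈ F, (B.card : ℝ) ≤ N * max (B.card / N) δ := fun B _ ↦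
    (div_le_iff₀' hN).1 (le_max_left _ _)
  have hremoved : ((F.biUnion id).card : ℝ) ≤ N * (m * δ) := by
    refine card_biUnion_le_of_sum_lt hN.le (fun B _ ↦ le_max_right _ _) hcard fun F' hF' hF'm ↦ ?_
    rw [hδ, mul_div_cancel₀ _ hm0.ne']
    exact h.sum_density_lt hp hq hpq hK hx (fun B hB ↦ hFD B (hF' hB))
      (hdisj.subset (Finset.coe_subset.2 hF')) hF'm ha hN (fun B _ ↦ lt_max_of_lt_right hδ0)
      (fun B hB ↦ hcard B (hF' hB)) (fun B hB ↦ hg B (hF' hB)) fun B hB ↦ hlarge B (hF' hB)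
  refine ⟨D \ F.biUnion id, Finset.sdiff_subset, ?_, fun B hB g hg ↦ ?_⟩
  · have hsub : F.biUnion id ⊆ D := Finset.biUnion_subset.2 hFD
    rw [Finset.cast_card_sdiff hsub, ← hNdef]
    rw [hδ, mul_div_cancel₀ _ hm0.ne'] at hremoved
    linarith
  · exact le_of_not_gt fun hlt ↦ hmax B hB ⟨g, hg, hlt⟩

/-- The constant of the weak-type estimate `SummingBound.exists_norm_le`. -/
def weakTypeConst (r : ℝ) : ℝ :=
  72 / (1 - 2 ^ (2 / r - 1))

lemma weakTypeConst_nonneg {r : ℝ} (hr : 2 ≤ r) : 0 ≤ weakTypeConst r := by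
  have hexp : 2 / r - 1 ≤ 0 := sub_nonpos.2 ((div_le_one (by linarith)).2 hr)
  have := Real.rpow_le_one_of_one_le_of_nonpos one_le_two hexp
  exact div_nonneg (by norm_num) (by linarith)

lemma combination_bound_le_weakTypeConst {r N : ℝ} {n : ℕ} (hr : 2 ≤ r) (hK : 0 ≤ K)
    (hN : 0 < N) :
    3 / (1 - 2 ^ (1 - 2 * (1 - 1 / r))) * (8 * K * N ^ (1 - 1 / q) * (√(2 * n) / N)) ≤
      weakTypeConst r * √n * K * N ^ (-(1 / q)) / 2 := by
  have hc := weakTypeConst_nonneg hr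
  have hNexp : N ^ (1 - 1 / q) / N = N ^ (-(1 / q)) := by
    rw [← Real.rpow_sub_one hN.ne']
    ring_nf
  have hsqrt_two : √2 / 3 ≤ 1 / 2 := by
    linarith [Real.sqrt_le_iff.2 (by norm_num : (0 : ℝ) ≤ 3 / 2 ∧ 2 ≤ (3 / 2 : ℝ) ^ 2)]
  calc 3 / (1 - 2 ^ (1 - 2 * (1 - 1 / r))) * (8 * K * N ^ (1 - 1 / q) * (√(2 * n) / N))
      = weakTypeConst r * √n * K * N ^ (-(1 / q)) * (√2 / 3) := by
        rw [← hNexp, weakTypeConst, Real.sqrt_mul zero_le_two,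
          show 1 - 2 * (1 - 1 / r) = 2 / r - 1 by ring]
        ring
    _ ≤ weakTypeConst r * √n * K * N ^ (-(1 / q)) * (1 / 2) := by gcongr
    _ = weakTypeConst r * √n * K * N ^ (-(1 / q)) / 2 := by ring

section FiniteRank

variable [FiniteDimensional ℝ (LinearMap.range (T : X →ₗ[ℝ] Y))] {r : ℝ} {n : ℕ}

lemma SummingBound.norm_le_of_norm_eq (h : SummingBound T p q K m) (hp : 1 ≤ p) (hq : 1 ≤ q)
    (hr : 2 < r) (hpq : 1 / q = 1 / p + 1 / r) (hK : 0 ≤ K) (hn : 1 ≤ n) (hnm : n ≤ m)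
    (hT : Module.finrank ℝ (LinearMap.range (T : X →ₗ[ℝ] Y)) ≤ n) (hx : WeakSumLeOne q D x)
    (hD : D.Nonempty) {t : ℝ} (ht : ∀ k ∈ D, ‖T (x k)‖ = t) :
    t ≤ weakTypeConst r * √n * K * (D.card : ℝ) ^ (-(1 / q)) := by
  have hm : 1 ≤ m := hn.trans hnm
  obtain ⟨R, hRD, hRcard, hblock⟩ :=
    h.exists_blockBound hp hq hpq hK hm hx hD (a := 8) (by norm_num)
  have hRN : (R.card : ℝ) ≤ D.card := mod_cast Finset.card_le_card hRD
  obtain ⟨N, hNdef⟩ : ∃ N : ℝ, N = D.card := ⟨_, rfl⟩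
  rw [← hNdef] at hRcard hRN hblock ⊢
  have hN : 0 < N := hNdef ▸ Nat.cast_pos.2 hD.card_pos
  have hR : R.Nonempty := Finset.card_pos.1 (Nat.cast_pos.1 (by linarith : (0 : ℝ) < R.card))
  obtain ⟨k, hkR, f, hf, hfk⟩ := exists_sum_smul_map_eq_of_rank_le (T : X →ₗ[ℝ] Y) hT hR x
  have hn1 : (1 : ℝ) ≤ n := Nat.one_le_cast.2 hn
  have hnm' : (n : ℝ) ≤ m := Nat.cast_le.2 hnm
  have hfN : ∑ l ∈ R, f l ^ 2 ≤ 2 * n / N := by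
    calc ∑ l ∈ R, f l ^ 2 ≤ n / R.card := hf
      _ ≤ n / (N / 2) := by
          gcongr
          linarith
      _ = 2 * n / N := by field_simp
  have hcutoff : 1 / 8 / (m : ℝ) * (4 * (2 * n)) ≤ 1 := by
    rw [div_mul_eq_mul_div, div_le_one (by linarith)]
    linarith
  have hα : 1 / 2 < 1 - 1 / r := by
    linarith [one_div_lt_one_div_of_lt two_pos hr]
  have hcomb := hblock.norm_sum_le_of_densityGauge (by positivity) hN (by positivity) hα hRN hfN
    (by linarith) hcutoff (ht k (hRD hkR) ▸ norm_nonneg _) fun l hl ↦ (ht l (hRD hl)).le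
  rw [show ‖∑ l ∈ R, f l • (T ∘ x) l‖ = t from hfk ▸ ht k (hRD hkR)] at hcomb
  linarith [combination_bound_le_weakTypeConst (n := n) (q := q) hr.le hK hN]

lemma SummingBound.exists_norm_le (h : SummingBound T p q K m) (hp : 1 ≤ p) (hq : 1 ≤ q)
    (hr : 2 < r) (hpq : 1 / q = 1 / p + 1 / r) (hK : 0 ≤ K) (hn : 1 ≤ n) (hnm : n ≤ m)
    (hT : Module.finrank ℝ (LinearMap.range (T : X →ₗ[ℝ] Y)) ≤ n) (hx : WeakSumLeOne q D x)
    (hD : D.Nonempty) :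
    ∃ k ∈ D, ‖T (x k)‖ ≤ weakTypeConst r * √n * K * (D.card : ℝ) ^ (-(1 / q)) := by
  obtain ⟨k, hkD, hmin⟩ := D.exists_min_image (fun l ↦ ‖T (x l)‖) hD
  refine ⟨k, hkD, ?_⟩
  set t := ‖T (x k)‖
  rcases eq_or_lt_of_le (norm_nonneg (T (x k))) with ht | ht
  · have := weakTypeConst_nonneg hr.le
    rw [show t = 0 from ht.symm]
    positivity
  have hpos : ∀ l ∈ D, 0 < ‖T (x l)‖ := fun l hl ↦ ht.trans_le (hmin l hl)
  have hx' : WeakSumLeOne q D fun l ↦ (t / ‖T (x l)‖) • x l :=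
    hx.smul (by linarith) fun l hl ↦ by
      rw [abs_of_pos (div_pos ht (hpos l hl))]
      exact (div_le_one (hpos l hl)).2 (hmin l hl)
  refine h.norm_le_of_norm_eq hp hq hr hpq hK hn hnm hT hx' hD fun l hl ↦ ?_
  rw [map_smul, norm_smul, Real.norm_of_nonneg (div_pos ht (hpos l hl)).le,
    div_mul_cancel₀ _ (hpos l hl).ne']

theorem SummingBound.of_finrank_range_le (h : SummingBound T p q K m) (hp : 1 ≤ p) (hq : 1 ≤ q)
    (hr : 2 < r) (hpq : 1 / q = 1 / p + 1 / r) (hK : 0 ≤ K) (hn : 1 ≤ n) (hnm : n ≤ m)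
    (hT : Module.finrank ℝ (LinearMap.range (T : X →ₗ[ℝ] Y)) ≤ n) (k : ℕ) :
    SummingBound T p q ((1 + r * weakTypeConst r * (√n * (m : ℝ) ^ (-(1 / r)))) * K) k := by
  intro x hx
  have hc := weakTypeConst_nonneg hr.le
  have hsum := sum_rpow_le_of_weak_type (s := Finset.univ) (a := fun i ↦ ‖T (x i)‖) hp
    (by linarith) hpq hK (by positivity : 0 ≤ weakTypeConst r * √n * K)
    (fun i ↦ norm_nonneg _) (hn.trans hnm)
    (fun H hH hHm ↦ h.sum_le (by linarith) (by linarith) hHm (hx.subset hH))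
    fun D hD hne ↦ h.exists_norm_le hp hq hr hpq hK hn hnm hT (hx.subset hD) hne
  convert hsum using 2
  ring

end FiniteRank

end Summing

lemma le_floor_rpow_half {r : ℝ} (hr : 2 ≤ r) {n : ℕ} (hn : 1 ≤ n) : n ≤ ⌊(n : ℝ) ^ (r / 2)⌋₊ :=
  Nat.le_floor (Real.self_le_rpow_of_one_le (mod_cast hn) (by linarith))

lemma sqrt_mul_floor_rpow_neg_le_two {r : ℝ} (hr : 1 ≤ r) {n : ℕ} (hn : 1 ≤ n) :
    √n * (⌊(n : ℝ) ^ (r / 2)⌋₊ : ℝ) ^ (-(1 / r)) ≤ 2 := by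
  have hpow : 1 ≤ (n : ℝ) ^ (r / 2) := Real.one_le_rpow (mod_cast hn) (by linarith)
  set m : ℕ := ⌊(n : ℝ) ^ (r / 2)⌋₊
  have hm1 : (1 : ℝ) ≤ m := mod_cast Nat.one_le_floor_iff _ |>.2 hpow
  have hlt : (n : ℝ) ^ (r / 2) ≤ 2 * m := by
    linarith [Nat.lt_floor_add_one ((n : ℝ) ^ (r / 2))]
  have hsqrt : √n ≤ (2 * m : ℝ) ^ (1 / r) := by
    calc √n = ((n : ℝ) ^ (r / 2)) ^ (1 / r) := by
          rw [← Real.rpow_mul (by positivity), Real.sqrt_eq_rpow]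
          congr 1
          field_simp
      _ ≤ (2 * m : ℝ) ^ (1 / r) := by gcongr
  have htwo : (2 : ℝ) ^ (1 / r) ≤ 2 :=
    Real.rpow_le_self_of_one_le one_le_two ((div_le_one (by linarith)).2 hr)
  calc √n * (m : ℝ) ^ (-(1 / r)) ≤ (2 * m : ℝ) ^ (1 / r) * (m : ℝ) ^ (-(1 / r)) := by gcongr
    _ = 2 ^ (1 / r) := by
        rw [Real.mul_rpow zero_le_two (by positivity), mul_assoc, ← Real.rpow_add (by linarith),
          add_neg_cancel, Real.rpow_zero, mul_one]
    _ ≤ 2 := htwo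

section ExtendedReals

variable {p q : ℝ≥0∞}

lemma eSum_ofReal_le_ofReal_iff {ι : Type*} [Fintype ι] (hp0 : p ≠ 0) (hp : p ≠ ∞) {a : ι → ℝ}
    (ha : ∀ i, 0 ≤ a i) {c : ℝ} (hc : 0 ≤ c) :
    eSum p (fun i ↦ ENNReal.ofReal (a i)) ≤ ENNReal.ofReal c ↔
      ∑ i, a i ^ p.toReal ≤ c ^ p.toReal := by
  have hp_pos : 0 < p.toReal := ENNReal.toReal_pos hp0 hp
  have hsum : ∑ i, ENNReal.ofReal (a i) ^ p.toReal = ENNReal.ofReal (∑ i, a i ^ p.toReal) := by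
    rw [ENNReal.ofReal_sum_of_nonneg fun i _ ↦ Real.rpow_nonneg (ha i) _]
    exact Finset.sum_congr rfl fun i _ ↦ ENNReal.ofReal_rpow_of_nonneg (ha i) hp_pos.le
  rw [eSum, if_neg hp, hsum, one_div, ENNReal.rpow_inv_le_iff hp_pos,
    ENNReal.ofReal_rpow_of_nonneg hc hp_pos.le,
    ENNReal.ofReal_le_ofReal_iff (Real.rpow_nonneg hc _)]

variable {X Y : Type*} [NormedAddCommGroup X] [NormedSpace ℝ X] [NormedAddCommGroup Y]
  [NormedSpace ℝ Y]

lemma weakLq_le_one_iff (hq0 : q ≠ 0) (hq : q ≠ ∞) {n : ℕ} (x : Fin n → X) :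
    weakLq q x ≤ 1 ↔ WeakSumLeOne q.toReal Finset.univ x := by
  rw [weakLq, iSup_le_iff, Subtype.forall]
  refine forall₂_congr fun f _ ↦ ?_
  rw [← ENNReal.ofReal_one, eSum_ofReal_le_ofReal_iff hq0 hq (fun i ↦ abs_nonneg _) zero_le_one,
    Real.one_rpow]

lemma piN_le_ofReal_iff (hp0 : p ≠ 0) (hp : p ≠ ∞) (hq0 : q ≠ 0) (hq : q ≠ ∞) (T : X →L[ℝ] Y)
    {m : ℕ} {K : ℝ} (hK : 0 ≤ K) :
    piN p q m T ≤ ENNReal.ofReal K ↔ SummingBound T p.toReal q.toReal K m := by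
  simp only [piN, iSup_le_iff, Subtype.forall, weakLq_le_one_iff hq0 hq,
    eSum_ofReal_le_ofReal_iff hp0 hp (fun _ ↦ norm_nonneg _) hK, SummingBound]

lemma piPQ_top_le_piN (hq0 : q ≠ 0) (hq : q ≠ ∞) (T : X →L[ℝ] Y) {m : ℕ} (hm : 1 ≤ m) :
    piPQ ∞ q T ≤ piN ∞ q m T := by
  have hq_pos : 0 < q.toReal := ENNReal.toReal_pos hq0 hq
  refine iSup_le fun N ↦ iSup_le fun ⟨x, hx⟩ ↦ ?_
  rw [eSum, if_pos rfl]
  refine iSup_le fun k ↦ ?_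
  let z : Fin m → X := fun i ↦ if i = ⟨0, hm⟩ then x k else 0
  have hz : weakLq q z ≤ 1 := by
    rw [weakLq_le_one_iff hq0 hq] at hx ⊢
    intro f hf
    calc ∑ i, |f (z i)| ^ q.toReal = |f (x k)| ^ q.toReal := by
          rw [Finset.sum_eq_single ⟨0, hm⟩ (fun i _ hi ↦ by simp [z, hi, hq_pos.ne']) (by simp)]
          simp only [z, if_true]
      _ ≤ ∑ i, |f (x i)| ^ q.toReal :=
          Finset.single_le_sum (f := fun i ↦ |f (x i)| ^ q.toReal)
            (fun i _ ↦ by positivity) (Finset.mem_univ k)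
      _ ≤ 1 := hx f hf
  calc ENNReal.ofReal ‖T (x k)‖ = ENNReal.ofReal ‖T (z ⟨0, hm⟩)‖ := by simp only [z, if_true]
    _ ≤ eSum ∞ fun i ↦ ENNReal.ofReal ‖T (z i)‖ := by
        rw [eSum, if_pos rfl]
        exact le_iSup (fun i ↦ ENNReal.ofReal ‖T (z i)‖) ⟨0, hm⟩
    _ ≤ piN ∞ q m T :=
        le_iSup (fun z : {z : Fin m → X // weakLq q z ≤ 1} ↦
          eSum ∞ fun i ↦ ENNReal.ofReal ‖T (z.1 i)‖) ⟨z, hz⟩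

lemma piPQ_zero (hp0 : p ≠ 0) : piPQ p q (0 : X →L[ℝ] Y) = 0 := by
  refine nonpos_iff_eq_zero.1 (iSup_le fun N ↦ iSup_le fun x ↦ ?_)
  by_cases hp : p = ∞
  · simp [eSum, hp]
  · simp [eSum, hp, ENNReal.toReal_pos hp0 hp]

lemma RankLE.eq_zero {T : X →L[ℝ] Y} (hT : RankLE T 0) : T = 0 := by
  have := hT.1
  have hrange : LinearMap.range (T : X →ₗ[ℝ] Y) = ⊥ :=
    Submodule.finrank_eq_zero.1 (Nat.le_zero.1 hT.2)
  exact ContinuousLinearMap.coe_injective (LinearMap.range_eq_bot.1 hrange)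

/-- The constant `c_r` of the theorem. -/
def summingConst (r : ℝ) : ℝ :=
  1 + 2 * r * weakTypeConst r

lemma one_le_summingConst {r : ℝ} (hr : 2 ≤ r) : 1 ≤ summingConst r := by
  have := weakTypeConst_nonneg hr
  exact le_add_of_nonneg_right (by positivity)

lemma SummingBound.summingConst_mul {T : X →L[ℝ] Y} {p q r K : ℝ} {n : ℕ}
    (h : SummingBound T p q K ⌊(n : ℝ) ^ (r / 2)⌋₊) (hp : 1 ≤ p) (hq : 1 ≤ q) (hr : 2 < r)
    (hpq : 1 / q = 1 / p + 1 / r) (hK : 0 ≤ K) (hn : 1 ≤ n) (hT : RankLE T n) (k : ℕ) :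
    SummingBound T p q (summingConst r * K) k := by
  intro x hx
  have := hT.1
  have hc := weakTypeConst_nonneg hr.le
  have : 0 < r := by linarith
  have hnm : n ≤ ⌊(n : ℝ) ^ (r / 2)⌋₊ := le_floor_rpow_half hr.le hn
  refine (h.of_finrank_range_le hp hq hr hpq hK hn hnm hT.2 k x hx).trans ?_
  rw [summingConst, mul_assoc 2, mul_comm 2]
  gcongr
  exact sqrt_mul_floor_rpow_neg_le_two (by linarith) hn

lemma one_div_toReal_eq_add {r : ℝ≥0∞} (hp : p ≠ 0) (hr : r ≠ 0) (hpq : 1 / q = 1 / p + 1 / r) :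
    1 / q.toReal = 1 / p.toReal + 1 / r.toReal := by
  have := congrArg ENNReal.toReal hpq
  rw [ENNReal.toReal_add (by simp [hp]) (by simp [hr])] at this
  simpa using this

lemma piPQ_le_summingConst_mul_piN {r : ℝ} (hr : 2 < r) (hp : 1 ≤ p) (hptop : p ≠ ∞) (hq : 1 ≤ q)
    (hqtop : q ≠ ∞) (hpq : 1 / q.toReal = 1 / p.toReal + 1 / r) {n : ℕ} (hn : 1 ≤ n)
    {T : X →L[ℝ] Y} (hT : RankLE T n) :
    piPQ p q T ≤ ENNReal.ofReal (summingConst r) * piN p q ⌊(n : ℝ) ^ (r / 2)⌋₊ T := by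
  set m := ⌊(n : ℝ) ^ (r / 2)⌋₊
  have hconst : 0 < summingConst r := one_pos.trans_le (one_le_summingConst hr.le)
  have hp0 : p ≠ 0 := (one_pos.trans_le hp).ne'
  have hq0 : q ≠ 0 := (one_pos.trans_le hq).ne'
  rcases eq_or_ne (piN p q m T) ∞ with htop | hfin
  · rw [htop, ENNReal.mul_top (ENNReal.ofReal_pos.2 hconst).ne']
    exact le_top
  have hK : 0 ≤ (piN p q m T).toReal := ENNReal.toReal_nonneg
  have hbound : SummingBound T p.toReal q.toReal (piN p q m T).toReal m :=
    (piN_le_ofReal_iff hp0 hptop hq0 hqtop T hK).1 (ENNReal.ofReal_toReal hfin).ge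
  refine iSup_le fun k ↦ ?_
  rw [← ENNReal.ofReal_toReal hfin, ← ENNReal.ofReal_mul hconst.le,
    piN_le_ofReal_iff hp0 hptop hq0 hqtop T (mul_nonneg hconst.le hK)]
  exact hbound.summingConst_mul (ENNReal.toReal_mono hptop hp) (ENNReal.toReal_mono hqtop hq) hr hpq
    hK hn hT k

theorem statement2_general {r : ℝ≥0∞} (hr1 : 2 < r) (hr2 : r < ∞) (hq : 1 ≤ q) (hqp : q < p)
    (hpq : 1 / q = 1 / p + 1 / r) {n : ℕ} {T : X →L[ℝ] Y} (hT : RankLE T n) :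
    piPQ p q T ≤
      ENNReal.ofReal (summingConst r.toReal) * piN p q ⌊(n : ℝ) ^ (r.toReal / 2)⌋₊ T := by
  have hr : 2 < r.toReal := (ENNReal.ofReal_lt_iff_lt_toReal zero_le_two hr2.ne).1 (by simpa)
  have hp : 1 ≤ p := hq.trans hqp.le
  rcases Nat.eq_zero_or_pos n with rfl | hn
  · rw [hT.eq_zero, piPQ_zero (one_pos.trans_le hp).ne']
    exact zero_le
  rcases eq_or_ne p ∞ with rfl | hptop
  · have hm : 1 ≤ ⌊(n : ℝ) ^ (r.toReal / 2)⌋₊ := le_trans hn (le_floor_rpow_half hr.le hn)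
    exact (piPQ_top_le_piN (one_pos.trans_le hq).ne' hqp.ne T hm).trans <|
      le_mul_of_one_le_left zero_le (ENNReal.one_le_ofReal.2 (one_le_summingConst hr.le))
  · exact piPQ_le_summingConst_mul_piN hr hp hptop hq hqp.ne_top
      (one_div_toReal_eq_add (one_pos.trans_le hp).ne' (pos_of_gt hr1).ne' hpq) hn hT

end ExtendedReals

/-- for `1 ≤ q < p ≤ ∞` with `1/q = 1/p + 1/r` and `2 < r < ∞`,
there is a constant `c_r` such that `π_{p,q}(T) ≤ c_r · π_{p,q}^{⌊n^{r/2}⌋}(T)`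
for every operator `T` between real Banach spaces of rank at most `n`. -/
theorem statement2 (r : ℝ≥0∞) (hr1 : 2 < r) (hr2 : r < ∞) :
    ∃ c : ℝ≥0, 0 < c ∧
      ∀ (q p : ℝ≥0∞), 1 ≤ q → q < p → 1 / q = 1 / p + 1 / r →
        ∀ (X Y : Type*) [NormedAddCommGroup X] [NormedSpace ℝ X] [CompleteSpace X]
          [NormedAddCommGroup Y] [NormedSpace ℝ Y] [CompleteSpace Y]
          (n : ℕ) (T : X →L[ℝ] Y), RankLE T n →
          piPQ p q T ≤ (c : ℝ≥0∞) * piN p q (⌊(n : ℝ) ^ (r.toReal / 2)⌋₊) T := by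
  have hr : 2 ≤ r.toReal := (ENNReal.ofReal_le_iff_le_toReal hr2.ne).1 (by simpa using hr1.le)
  exact ⟨(summingConst r.toReal).toNNReal,
    Real.toNNReal_pos.2 (one_pos.trans_le (one_le_summingConst hr)),
    fun _ _ hq hqp hpq _ _ _ _ _ _ _ _ _ _ hT ↦ statement2_general hr1 hr2 hq hqp hpq hT⟩

end
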